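/- The process r̄(k) = (r(k), s(k), σ(k), ρ(k)) is a time-homogeneous Markov chain with state space 𝔛 and transition probabilities p̄: for every k ≥ 0, every χ' ∈ 𝔛, and all χ_0,…,χ_k ∈ 𝔛, one has Pr(r̄(k+1)=χ' and r̄(j)=χ_j for all 0 ≤ j ≤ k) = p̄_{χ_k χ'} · Pr(r̄(j)=χ_j for all 0 ≤ j ≤ k). -/

import Mathlib

open MeasureTheory ProbabilityTheory Matrix

noncomputable section

/-- The state space `[N] × [M] × [N] × [T]` of the extended process `r̄`.
`Fin N`, `Fin M`, `Fin T` play the roles of `[N] = {1,…,N}`, `[M]`, `[T]`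
(with `Fin T` being the 0-indexed version of `[T] = {1,…,T}`, i.e. `δ ∈ [T]`
corresponds to `δ - 1 : Fin T`). -/
abbrev XT (NN MM T : ℕ) : Type := Fin NN × Fin MM × Fin NN × Fin T

/-- `X` is a time-homogeneous Markov chain with transition probability matrix `P`:
for every `k`, every state `j` and every sequence of states `i`,
`Pr(X(k+1) = j ∧ X(l) = i l for all l ≤ k) = P (i k) j * Pr(X(l) = i l for all l ≤ k)`. -/
def IsMarkovChain {Ω : Type} {_mΩ : MeasurableSpace Ω} (μ : Measure Ω) {S : Type}
    (X : ℕ → Ω → S) (P : S → S → ℝ) : Prop :=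
  ∀ (k : ℕ) (j : S) (i : ℕ → S),
    (μ {ω | X (k + 1) ω = j ∧ ∀ l ≤ k, X l ω = i l}).toReal
      = P (i k) j * (μ {ω | ∀ l ≤ k, X l ω = i l}).toReal

/-- `⌊m⌋_T`, the unique element of `{0,…,T-1}` congruent to `m` modulo `T`, as `Fin T`. -/
def intToFin (T : ℕ) [NeZero T] (a : ℤ) : Fin T :=
  ⟨(a % (T : ℤ)).toNat, by
    have hT : 0 < (T : ℤ) := by
      exact_mod_cast Nat.pos_of_ne_zero (NeZero.ne T)
    have h1 : 0 ≤ a % (T : ℤ) := Int.emod_nonneg a (by omega)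
    have h2 : a % (T : ℤ) < (T : ℤ) := Int.emod_lt_of_pos a hT
    omega⟩

-- `τ(k)`: the most recent observation time `≤ k` (i.e. the largest `j ≤ k` with
-- `f(s(j)) = 1`), or `τ₀` if no observation has occurred up to time `k` (`k < t₀`).
open Classical in
def tauZ {Ω : Type} {MM : ℕ} (s : ℕ → Ω → Fin MM) (f : Fin MM → Bool)
    (τ₀ : ℤ) (k : ℕ) (ω : Ω) : ℤ :=
  if ∃ j ≤ k, f (s j ω) = true
  then ((Nat.findGreatest (fun j => f (s j ω) = true) k : ℕ) : ℤ)
  else τ₀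

-- `σ(k) = r(τ(k))` if an observation occurred by time `k` (i.e. `k ≥ t₀`), else `σ₀`.
open Classical in
def sigmaProc {Ω : Type} {NN MM : ℕ} (r : ℕ → Ω → Fin NN) (s : ℕ → Ω → Fin MM)
    (f : Fin MM → Bool) (σ₀ : Fin NN) (k : ℕ) (ω : Ω) : Fin NN :=
  if ∃ j ≤ k, f (s j ω) = true
  then r (Nat.findGreatest (fun j => f (s j ω) = true) k) ω
  else σ₀

/-- `ρ(k) = ⌊k - τ(k)⌋_T + 1 ∈ [T]`, represented 0-indexed as `⌊k - τ(k)⌋_T : Fin T`. -/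
def rhoProc {Ω : Type} {MM T : ℕ} [NeZero T] (s : ℕ → Ω → Fin MM) (f : Fin MM → Bool)
    (τ₀ : ℤ) (k : ℕ) (ω : Ω) : Fin T :=
  intToFin T ((k : ℤ) - tauZ s f τ₀ k ω)

/-- The extended process `r̄(k) = (r(k), s(k), σ(k), ρ(k))`. -/
def rbarProc {Ω : Type} {NN MM T : ℕ} [NeZero T] (r : ℕ → Ω → Fin NN)
    (s : ℕ → Ω → Fin MM) (f : Fin MM → Bool) (τ₀ : ℤ) (σ₀ : Fin NN)
    (k : ℕ) (ω : Ω) : XT NN MM T :=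
  (r k ω, s k ω, sigmaProc r s f σ₀ k ω, rhoProc s f τ₀ k ω)

/-- Membership in `𝔛`: if `f(β) = 1` then `α = γ` and `δ = 1` (0-indexed: `δ = 0`). -/
def inX {NN MM T : ℕ} [NeZero T] (f : Fin MM → Bool) (χ : XT NN MM T) : Prop :=
  f χ.2.1 = true → χ.1 = χ.2.2.1 ∧ χ.2.2.2 = 0

/-- The transition probabilities `p̄_{χχ'}` of the extended chain. The condition
`⌊δ' - δ - 1⌋_T = 0` for `δ, δ' ∈ [T]` is, in 0-indexed form, `δ' = δ + 1` in `Fin T`. -/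
def pbar {NN MM T : ℕ} [NeZero T] (P : Matrix (Fin NN) (Fin NN) ℝ)
    (Q : Matrix (Fin MM) (Fin MM) ℝ) (f : Fin MM → Bool) (χ χ' : XT NN MM T) : ℝ :=
  (if f χ'.2.1 = true
    then (if χ'.1 = χ'.2.2.1 ∧ χ'.2.2.2 = 0 then (1 : ℝ) else 0)
    else (if χ'.2.2.1 = χ.2.2.1 ∧ χ'.2.2.2 = χ.2.2.2 + 1 then (1 : ℝ) else 0))
  * P χ.1 χ'.1 * Q χ.2.1 χ'.2.1

/-- The state trajectory of the closed-loop system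
`x(k+1) = A(mode(k)) x(k) + E(mode(k)) w(k)`, `x(0) = x₀`. -/
def traj {Ω S : Type} {n q : ℕ}
    (Amat : S → Matrix (Fin n) (Fin n) ℝ) (Emat : S → Matrix (Fin n) (Fin q) ℝ)
    (mode : ℕ → Ω → S) (w : ℕ → Ω → Fin q → ℝ) (x0 : Fin n → ℝ) : ℕ → Ω → Fin n → ℝ
  | 0, _ => x0
  | (k + 1), ω =>
      (Amat (mode k ω)).mulVec (traj Amat Emat mode w x0 k ω)
        + (Emat (mode k ω)).mulVec (w k ω)

/-- `A_{K,χ} = A_α + B_α K_{γ,δ}`. -/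
def AKmat {NN MM T n m : ℕ} (A : Fin NN → Matrix (Fin n) (Fin n) ℝ)
    (B : Fin NN → Matrix (Fin n) (Fin m) ℝ)
    (K : Fin NN → Fin T → Matrix (Fin m) (Fin n) ℝ) (χ : XT NN MM T) :
    Matrix (Fin n) (Fin n) ℝ :=
  A χ.1 + B χ.1 * K χ.2.2.1 χ.2.2.2

/-- `C_{K,χ} = C_α + D_α K_{γ,δ}`. -/
def CKmat {NN MM T n m ℓ : ℕ} (C : Fin NN → Matrix (Fin ℓ) (Fin n) ℝ)
    (D : Fin NN → Matrix (Fin ℓ) (Fin m) ℝ)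
    (K : Fin NN → Fin T → Matrix (Fin m) (Fin n) ℝ) (χ : XT NN MM T) :
    Matrix (Fin ℓ) (Fin n) ℝ :=
  C χ.1 + D χ.1 * K χ.2.2.1 χ.2.2.2

/-- Squared Euclidean norm of a vector, as an extended nonnegative real. -/
def sqE {d : ℕ} (v : Fin d → ℝ) : ENNReal := ENNReal.ofReal (∑ i, (v i) ^ 2)

-- The operator `D̄_χ(R) = ∑_{χ' ∈ 𝔛} p̄_{χ'χ} R_{χ'}`.
open Classical in
def Dop {NN MM T n : ℕ} [NeZero T] (P : Matrix (Fin NN) (Fin NN) ℝ)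
    (Q : Matrix (Fin MM) (Fin MM) ℝ) (f : Fin MM → Bool)
    (R : XT NN MM T → Matrix (Fin n) (Fin n) ℝ) (χ : XT NN MM T) :
    Matrix (Fin n) (Fin n) ℝ :=
  ∑ χ' : XT NN MM T, if inX f χ' then pbar P Q f χ' χ • R χ' else 0

-- The operator `F̄_χ(Z) = ∑_{χ' ∈ 𝔛} p̄_{χχ'} Z_{χ,χ'}`.
open Classical in
def Fop {NN MM T n : ℕ} [NeZero T] (P : Matrix (Fin NN) (Fin NN) ℝ)
    (Q : Matrix (Fin MM) (Fin MM) ℝ) (f : Fin MM → Bool)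
    (Z : XT NN MM T → XT NN MM T → Matrix (Fin n) (Fin n) ℝ) (χ : XT NN MM T) :
    Matrix (Fin n) (Fin n) ℝ :=
  ∑ χ' : XT NN MM T, if inX f χ' then pbar P Q f χ χ' • Z χ χ' else 0

/-- A pair `(γ,δ) ∈ [N] × [T]` is admissible if `(α,β,γ,δ) ∈ 𝔛` for some `α, β`. -/
def Admissible {NN MM T : ℕ} [NeZero T] (f : Fin MM → Bool) (g : Fin NN) (d : Fin T) : Prop :=
  ∃ (α : Fin NN) (β : Fin MM), inX (T := T) f (α, β, g, d)

/-- A realization, on some probability space, of the pair of independent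
time-homogeneous Markov chains `(r, s)` with transition matrices `P` and `Q`. -/
structure MJLSReal (NN MM : ℕ) (P : Matrix (Fin NN) (Fin NN) ℝ)
    (Q : Matrix (Fin MM) (Fin MM) ℝ) : Type 1 where
  Ω : Type
  inst : MeasurableSpace Ω
  μ : @Measure Ω inst
  prob : IsProbabilityMeasure μ
  r : ℕ → Ω → Fin NN
  s : ℕ → Ω → Fin MM
  meas_r : ∀ k, Measurable[inst] (r k)
  meas_s : ∀ k, Measurable[inst] (s k)
  markov_r : IsMarkovChain μ r fun i j => P i j
  markov_s : IsMarkovChain μ s fun i j => Q i j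
  indep : IndepFun (fun ω l => r l ω) (fun ω l => s l ω) μ

/-- A realization, on some probability space, of a time-homogeneous Markov chain `θ`
taking values in `𝔛` with transition probabilities `p̄`. -/
structure ThetaReal (NN MM T : ℕ) [NeZero T] (P : Matrix (Fin NN) (Fin NN) ℝ)
    (Q : Matrix (Fin MM) (Fin MM) ℝ) (f : Fin MM → Bool) : Type 1 where
  Ω : Type
  inst : MeasurableSpace Ω
  μ : @Measure Ω inst
  prob : IsProbabilityMeasure μ
  θ : ℕ → Ω → XT NN MM T
  meas : ∀ k, Measurable[inst] (θ k)
  mem : ∀ k ω, inX f (θ k ω)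
  markov : IsMarkovChain μ θ (pbar P Q f)

/-- Mean square stability of the closed-loop system `Σ_K`: there are `c > 0` and
`λ ∈ [0,1)` such that for every realization, every deterministic initialization
(`r(0) = r₀`, `s(0) = s₀` a.s., together with `σ₀` and `τ₀ ≤ 0`, so that `r̄(0)`
is a deterministic element of `𝔛`), every `x₀` and every `k`,
`E[‖x(k)‖²] ≤ c λ^k ‖x₀‖²` (with `w ≡ 0`). -/
def MeanSquareStable {NN MM T n m q : ℕ} [NeZero T]
    (P : Matrix (Fin NN) (Fin NN) ℝ) (Qm : Matrix (Fin MM) (Fin MM) ℝ) (f : Fin MM → Bool)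
    (A : Fin NN → Matrix (Fin n) (Fin n) ℝ) (B : Fin NN → Matrix (Fin n) (Fin m) ℝ)
    (E : Fin NN → Matrix (Fin n) (Fin q) ℝ)
    (K : Fin NN → Fin T → Matrix (Fin m) (Fin n) ℝ) : Prop :=
  ∃ c : ℝ, 0 < c ∧ ∃ lam : ℝ, 0 ≤ lam ∧ lam < 1 ∧
    ∀ (S : MJLSReal NN MM P Qm) (τ₀ : ℤ), τ₀ ≤ 0 →
      ∀ (σ₀ r₀ : Fin NN) (s₀ : Fin MM),
        (∀ᵐ ω ∂S.μ, S.r 0 ω = r₀ ∧ S.s 0 ω = s₀) →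
        ∀ (x0 : Fin n → ℝ) (k : ℕ),
          (∫⁻ ω, sqE (traj (AKmat A B K) (fun χ => E χ.1)
              (rbarProc S.r S.s f τ₀ σ₀) (fun _ _ => 0) x0 k ω) ∂S.μ)
            ≤ ENNReal.ofReal (c * lam ^ k * ∑ i, (x0 i) ^ 2)

/-- Mean square stability of `Σ̄_K` (the system driven by the chain `θ`). -/
def MeanSquareStableBar {NN MM T n m q : ℕ} [NeZero T]
    (P : Matrix (Fin NN) (Fin NN) ℝ) (Qm : Matrix (Fin MM) (Fin MM) ℝ) (f : Fin MM → Bool)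
    (A : Fin NN → Matrix (Fin n) (Fin n) ℝ) (B : Fin NN → Matrix (Fin n) (Fin m) ℝ)
    (E : Fin NN → Matrix (Fin n) (Fin q) ℝ)
    (K : Fin NN → Fin T → Matrix (Fin m) (Fin n) ℝ) : Prop :=
  ∃ c : ℝ, 0 < c ∧ ∃ lam : ℝ, 0 ≤ lam ∧ lam < 1 ∧
    ∀ (S : ThetaReal NN MM T P Qm f) (χ : XT NN MM T), inX f χ →
      (∀ᵐ ω ∂S.μ, S.θ 0 ω = χ) →
      ∀ (x0 : Fin n → ℝ) (k : ℕ),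
        (∫⁻ ω, sqE (traj (AKmat A B K) (fun χ' => E χ'.1) S.θ (fun _ _ => 0) x0 k ω) ∂S.μ)
          ≤ ENNReal.ofReal (c * lam ^ k * ∑ i, (x0 i) ^ 2)

/-- The impulse disturbance `w = e_i φ`, i.e. `w(0) = e_i` and `w(k) = 0` for `k ≥ 1`. -/
def impulse {Ω : Type} (q : ℕ) (i : Fin q) : ℕ → Ω → Fin q → ℝ :=
  fun k _ j => if k = 0 ∧ j = i then 1 else 0

/-- `∑_k E[‖z(k; 0, χ, e_i φ)‖²]` for `Σ_K` on a given realization with data `(τ₀, σ₀)`. -/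
def H2TermSigma {NN MM T n m q ℓ : ℕ} [NeZero T]
    {P : Matrix (Fin NN) (Fin NN) ℝ} {Qm : Matrix (Fin MM) (Fin MM) ℝ}
    (S : MJLSReal NN MM P Qm) (f : Fin MM → Bool) (τ₀ : ℤ) (σ₀ : Fin NN)
    (A : Fin NN → Matrix (Fin n) (Fin n) ℝ) (B : Fin NN → Matrix (Fin n) (Fin m) ℝ)
    (C : Fin NN → Matrix (Fin ℓ) (Fin n) ℝ) (D : Fin NN → Matrix (Fin ℓ) (Fin m) ℝ)
    (E : Fin NN → Matrix (Fin n) (Fin q) ℝ)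
    (K : Fin NN → Fin T → Matrix (Fin m) (Fin n) ℝ) (i : Fin q) : ENNReal :=
  ∑' k : ℕ, ∫⁻ ω, sqE ((CKmat C D K (rbarProc S.r S.s f τ₀ σ₀ k ω)).mulVec
      (traj (AKmat A B K) (fun χ => E χ.1) (rbarProc S.r S.s f τ₀ σ₀)
        (impulse q i) 0 k ω)) ∂S.μ

-- `‖Σ_K‖₂² < γ`, where `‖Σ_K‖₂² = ∑_{i=1}^q ∑_{χ ∈ 𝔛} μ̄(χ) ‖z(⬝;0,χ,e_iφ)‖₂²` and the
-- expectations are over arbitrary realizations with deterministic initialization `r̄(0) = χ`.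
open Classical in
def H2SqLtSigma {NN MM T n m q ℓ : ℕ} [NeZero T]
    (P : Matrix (Fin NN) (Fin NN) ℝ) (Qm : Matrix (Fin MM) (Fin MM) ℝ) (f : Fin MM → Bool)
    (A : Fin NN → Matrix (Fin n) (Fin n) ℝ) (B : Fin NN → Matrix (Fin n) (Fin m) ℝ)
    (C : Fin NN → Matrix (Fin ℓ) (Fin n) ℝ) (D : Fin NN → Matrix (Fin ℓ) (Fin m) ℝ)
    (E : Fin NN → Matrix (Fin n) (Fin q) ℝ)
    (K : Fin NN → Fin T → Matrix (Fin m) (Fin n) ℝ)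
    (μbar : XT NN MM T → ℝ) (γ : ℝ) : Prop :=
  ∀ (S : Fin q → XT NN MM T → MJLSReal NN MM P Qm)
    (τ : Fin q → XT NN MM T → ℤ) (σv : Fin q → XT NN MM T → Fin NN),
    (∀ i χ, inX f χ → τ i χ ≤ 0 ∧
        (∀ᵐ ω ∂(S i χ).μ, rbarProc (S i χ).r (S i χ).s f (τ i χ) (σv i χ) 0 ω = χ)) →
    (∑ i : Fin q, ∑ χ : XT NN MM T,
        if inX f χ
        then ENNReal.ofReal (μbar χ) * H2TermSigma (S i χ) f (τ i χ) (σv i χ) A B C D E K i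
        else 0)
      < ENNReal.ofReal γ

/-- `∑_k E[‖z̄(k; 0, χ, e_i φ)‖²]` for `Σ̄_K` on a given realization of `θ`. -/
def H2TermBar {NN MM T n m q ℓ : ℕ} [NeZero T]
    {P : Matrix (Fin NN) (Fin NN) ℝ} {Qm : Matrix (Fin MM) (Fin MM) ℝ} {f : Fin MM → Bool}
    (S : ThetaReal NN MM T P Qm f)
    (A : Fin NN → Matrix (Fin n) (Fin n) ℝ) (B : Fin NN → Matrix (Fin n) (Fin m) ℝ)
    (C : Fin NN → Matrix (Fin ℓ) (Fin n) ℝ) (D : Fin NN → Matrix (Fin ℓ) (Fin m) ℝ)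
    (E : Fin NN → Matrix (Fin n) (Fin q) ℝ)
    (K : Fin NN → Fin T → Matrix (Fin m) (Fin n) ℝ) (i : Fin q) : ENNReal :=
  ∑' k : ℕ, ∫⁻ ω, sqE ((CKmat C D K (S.θ k ω)).mulVec
      (traj (AKmat A B K) (fun χ => E χ.1) S.θ (impulse q i) 0 k ω)) ∂S.μ

-- `‖Σ̄_K‖₂² < γ` (the `H₂` norm of `Σ̄_K`, defined with `θ` in place of `r̄`).
open Classical in
def H2SqLtBar {NN MM T n m q ℓ : ℕ} [NeZero T]
    (P : Matrix (Fin NN) (Fin NN) ℝ) (Qm : Matrix (Fin MM) (Fin MM) ℝ) (f : Fin MM → Bool)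
    (A : Fin NN → Matrix (Fin n) (Fin n) ℝ) (B : Fin NN → Matrix (Fin n) (Fin m) ℝ)
    (C : Fin NN → Matrix (Fin ℓ) (Fin n) ℝ) (D : Fin NN → Matrix (Fin ℓ) (Fin m) ℝ)
    (E : Fin NN → Matrix (Fin n) (Fin q) ℝ)
    (K : Fin NN → Fin T → Matrix (Fin m) (Fin n) ℝ)
    (μbar : XT NN MM T → ℝ) (γ : ℝ) : Prop :=
  ∀ (S : Fin q → XT NN MM T → ThetaReal NN MM T P Qm f),
    (∀ i χ, inX f χ → (∀ᵐ ω ∂(S i χ).μ, (S i χ).θ 0 ω = χ)) →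
    (∑ i : Fin q, ∑ χ : XT NN MM T,
        if inX f χ
        then ENNReal.ofReal (μbar χ) * H2TermBar (S i χ) A B C D E K i
        else 0)
      < ENNReal.ofReal γ

/-- The σ-algebra `Θ_k` generated by `r(0), s(0), …, r(k), s(k)`, for a realization. -/
def sigFiltSigma {NN MM : ℕ} {P : Matrix (Fin NN) (Fin NN) ℝ}
    {Q : Matrix (Fin MM) (Fin MM) ℝ} (S : MJLSReal NN MM P Q) (k : ℕ) :
    MeasurableSpace S.Ω :=
  ⨆ j ∈ Finset.range (k + 1),
    (MeasurableSpace.comap (S.r j) inferInstance ⊔ MeasurableSpace.comap (S.s j) inferInstance)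

/-- The σ-algebra generated by `θ(0), …, θ(k)`, for a realization of `θ`. -/
def sigFiltBar {NN MM T : ℕ} [NeZero T] {P : Matrix (Fin NN) (Fin NN) ℝ}
    {Q : Matrix (Fin MM) (Fin MM) ℝ} {f : Fin MM → Bool} (S : ThetaReal NN MM T P Q f)
    (k : ℕ) : MeasurableSpace S.Ω :=
  ⨆ j ∈ Finset.range (k + 1), MeasurableSpace.comap (S.θ j) inferInstance

/-- `Σ_K` satisfies `‖Σ_K‖∞² < γ`: there is `0 ≤ c < γ` such that `‖z‖₂² ≤ c ‖w‖₂²`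
for every realization, every deterministic initialization `r̄(0) = r̄₀ ∈ 𝔛`, and
every nonzero `w ∈ ℓ²(ℝ^q)` adapted to `(Θ_k)_k` (with `x₀ = 0`). -/
def HinfSqLtSigma {NN MM T n m q ℓ : ℕ} [NeZero T]
    (P : Matrix (Fin NN) (Fin NN) ℝ) (Qm : Matrix (Fin MM) (Fin MM) ℝ) (f : Fin MM → Bool)
    (A : Fin NN → Matrix (Fin n) (Fin n) ℝ) (B : Fin NN → Matrix (Fin n) (Fin m) ℝ)
    (C : Fin NN → Matrix (Fin ℓ) (Fin n) ℝ) (D : Fin NN → Matrix (Fin ℓ) (Fin m) ℝ)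
    (E : Fin NN → Matrix (Fin n) (Fin q) ℝ)
    (K : Fin NN → Fin T → Matrix (Fin m) (Fin n) ℝ) (γ : ℝ) : Prop :=
  ∃ c : ℝ, 0 ≤ c ∧ c < γ ∧
    ∀ (S : MJLSReal NN MM P Qm) (τ₀ : ℤ), τ₀ ≤ 0 → ∀ (σ₀ : Fin NN) (χ : XT NN MM T),
      inX f χ → (∀ᵐ ω ∂S.μ, rbarProc S.r S.s f τ₀ σ₀ 0 ω = χ) →
      ∀ (w : ℕ → S.Ω → Fin q → ℝ),
        (∀ k, Measurable[sigFiltSigma S k] (w k)) →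
        0 < (∑' k : ℕ, ∫⁻ ω, sqE (w k ω) ∂S.μ) →
        (∑' k : ℕ, ∫⁻ ω, sqE (w k ω) ∂S.μ) ≠ ⊤ →
        (∑' k : ℕ, ∫⁻ ω, sqE ((CKmat C D K (rbarProc S.r S.s f τ₀ σ₀ k ω)).mulVec
            (traj (AKmat A B K) (fun χ' => E χ'.1) (rbarProc S.r S.s f τ₀ σ₀) w 0 k ω)) ∂S.μ)
          ≤ ENNReal.ofReal c * (∑' k : ℕ, ∫⁻ ω, sqE (w k ω) ∂S.μ)

/-- `Σ̄_K` satisfies `‖Σ̄_K‖∞² < γ` (disturbances adapted to the filtration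
generated by `θ`). -/
def HinfSqLtBar {NN MM T n m q ℓ : ℕ} [NeZero T]
    (P : Matrix (Fin NN) (Fin NN) ℝ) (Qm : Matrix (Fin MM) (Fin MM) ℝ) (f : Fin MM → Bool)
    (A : Fin NN → Matrix (Fin n) (Fin n) ℝ) (B : Fin NN → Matrix (Fin n) (Fin m) ℝ)
    (C : Fin NN → Matrix (Fin ℓ) (Fin n) ℝ) (D : Fin NN → Matrix (Fin ℓ) (Fin m) ℝ)
    (E : Fin NN → Matrix (Fin n) (Fin q) ℝ)
    (K : Fin NN → Fin T → Matrix (Fin m) (Fin n) ℝ) (γ : ℝ) : Prop :=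
  ∃ c : ℝ, 0 ≤ c ∧ c < γ ∧
    ∀ (S : ThetaReal NN MM T P Qm f) (χ : XT NN MM T),
      inX f χ → (∀ᵐ ω ∂S.μ, S.θ 0 ω = χ) →
      ∀ (w : ℕ → S.Ω → Fin q → ℝ),
        (∀ k, Measurable[sigFiltBar S k] (w k)) →
        0 < (∑' k : ℕ, ∫⁻ ω, sqE (w k ω) ∂S.μ) →
        (∑' k : ℕ, ∫⁻ ω, sqE (w k ω) ∂S.μ) ≠ ⊤ →
        (∑' k : ℕ, ∫⁻ ω, sqE ((CKmat C D K (S.θ k ω)).mulVec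
            (traj (AKmat A B K) (fun χ' => E χ'.1) S.θ w 0 k ω)) ∂S.μ)
          ≤ ENNReal.ofReal c * (∑' k : ℕ, ∫⁻ ω, sqE (w k ω) ∂S.μ)

/-- The symmetric 4×4 block matrix appearing in the `H∞` LMI, with diagonal blocks
`D1, γ I_q, D3, I_ℓ`, sub-diagonal blocks `(3,1) = B31`, `(3,2) = B32`, `(4,1) = B41`,
the corresponding transposed blocks above the diagonal, and zeros elsewhere. -/
def hinfBlock {n q ℓ : ℕ} (γ : ℝ) (D1 D3 : Matrix (Fin n) (Fin n) ℝ)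
    (B31 : Matrix (Fin n) (Fin n) ℝ) (B32 : Matrix (Fin n) (Fin q) ℝ)
    (B41 : Matrix (Fin ℓ) (Fin n) ℝ) :
    Matrix ((Fin n ⊕ Fin q) ⊕ (Fin n ⊕ Fin ℓ)) ((Fin n ⊕ Fin q) ⊕ (Fin n ⊕ Fin ℓ)) ℝ :=
  Matrix.fromBlocks
    (Matrix.fromBlocks D1 0 0 (γ • (1 : Matrix (Fin q) (Fin q) ℝ)))
    (Matrix.fromBlocks B31ᵀ B41ᵀ B32ᵀ 0)
    (Matrix.fromBlocks B31 B32 B41 0)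
    (Matrix.fromBlocks D3 0 0 (1 : Matrix (Fin ℓ) (Fin ℓ) ℝ))

/-!
By independence the pair `(r, s)` is a Markov chain with transition probabilities `P ⊗ Q`. The
remaining coordinates `(σ, ρ)` of `r̄` carry no further randomness: they are updated
deterministically from their previous value and the new value of `(r, s)`, being reset to
`(r(k+1), 1)` at an observation and becoming `(σ, ρ + 1)` otherwise. Hence a path of `r̄` either is
impossible or has the same probability as its projection to `(r, s)`, and `p̄` is the transition
probability of `(r, s)` restricted to the moves that the update rule allows.
-/

theorem measurableSet_setOf_forall_le_eq {S : Type*} [MeasurableSpace S]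
    [MeasurableSingletonClass S] (k : ℕ) (i : ℕ → S) :
    MeasurableSet {x : ℕ → S | ∀ l ≤ k, x l = i l} :=
  MeasurableSet.pi (Set.to_countable (Set.Iic k)) fun l _ => measurableSet_singleton (i l)

theorem eq_of_recursion_of_proj_eq {S S' : Type*} {π : S' → S} {init : S → S'}
    {step : S' → S → S'} {u v : ℕ → S'}
    (hu₀ : u 0 = init (π (u 0))) (hu : ∀ k, u (k + 1) = step (u k) (π (u (k + 1))))
    (hv₀ : v 0 = init (π (v 0))) (hv : ∀ k, v (k + 1) = step (v k) (π (v (k + 1))))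
    (k : ℕ) (h : ∀ l ≤ k, π (u l) = π (v l)) : u k = v k := by
  induction k with
  | zero => rw [hu₀, hv₀, h 0 le_rfl]
  | succ k ih => rw [hu, hv, h (k + 1) le_rfl, ih fun l hl => h l (Nat.le_succ_of_le hl)]

namespace IsMarkovChain

variable {Ω S S' : Type} [MeasurableSpace Ω] {μ : Measure Ω} {P : S → S → ℝ}

theorem prodMk [MeasurableSpace S] [MeasurableSingletonClass S] [MeasurableSpace S']
    [MeasurableSingletonClass S'] {X : ℕ → Ω → S} {Y : ℕ → Ω → S'} {Q : S' → S' → ℝ}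
    (hX : IsMarkovChain μ X P) (hY : IsMarkovChain μ Y Q)
    (hXY : IndepFun (fun ω l => X l ω) (fun ω l => Y l ω) μ) :
    IsMarkovChain μ (fun k ω => (X k ω, Y k ω)) fun a b => P a.1 b.1 * Q a.2 b.2 := by
  intro k j i
  have toReal_inter {A : Set (ℕ → S)} {B : Set (ℕ → S')} (hA : MeasurableSet A)
      (hB : MeasurableSet B) : (μ {ω | (fun l => X l ω) ∈ A ∧ (fun l => Y l ω) ∈ B}).toReal =
        (μ {ω | (fun l => X l ω) ∈ A}).toReal * (μ {ω | (fun l => Y l ω) ∈ B}).toReal := by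
    rw [← ENNReal.toReal_mul]
    exact congrArg ENNReal.toReal (hXY.measure_inter_preimage_eq_mul A B hA hB)
  have past := toReal_inter (measurableSet_setOf_forall_le_eq k fun l => (i l).1)
    (measurableSet_setOf_forall_le_eq k fun l => (i l).2)
  have next := toReal_inter
    ((measurable_pi_apply (k + 1) (measurableSet_singleton j.1)).inter
      (measurableSet_setOf_forall_le_eq k fun l => (i l).1))
    ((measurable_pi_apply (k + 1) (measurableSet_singleton j.2)).inter
      (measurableSet_setOf_forall_le_eq k fun l => (i l).2))
  simp only [Set.mem_inter_iff, Set.mem_preimage, Set.mem_singleton_iff, Set.mem_ofPred_eq]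
    at past next
  simp_rw [and_and_and_comm (b := ∀ l ≤ k, X l _ = _)] at next
  simp only [Prod.ext_iff, forall_and]
  rw [next, past, hX, hY, mul_mul_mul_comm]

theorem of_recursion [DecidableEq S'] {Z : ℕ → Ω → S'} (π : S' → S) (init : S → S')
    (step : S' → S → S') (hπ : IsMarkovChain μ (fun k ω => π (Z k ω)) P)
    (hZ₀ : ∀ ω, Z 0 ω = init (π (Z 0 ω)))
    (hZ : ∀ k ω, Z (k + 1) ω = step (Z k ω) (π (Z (k + 1) ω))) :
    IsMarkovChain μ Z fun z z' => if z' = step z (π z') then P (π z) (π z') else 0 := by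
  intro k z' z
  rcases Set.eq_empty_or_nonempty {ω | ∀ l ≤ k, Z l ω = z l} with hE | ⟨ω₀, hω₀⟩
  · simp only [Set.ofPred_and, hE, Set.inter_empty, measure_empty, ENNReal.toReal_zero, mul_zero]
  have past_iff (ω) : (∀ l ≤ k, Z l ω = z l) ↔ ∀ l ≤ k, π (Z l ω) = π (z l) := by
    refine ⟨fun h l hl => congrArg π (h l hl), fun h l hl => ?_⟩
    rw [← hω₀ l hl]
    refine eq_of_recursion_of_proj_eq (u := (Z · ω)) (v := (Z · ω₀)) (hZ₀ ω) (hZ · ω) (hZ₀ ω₀)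
      (hZ · ω₀) l fun m hm => ?_
    rw [h m (hm.trans hl), hω₀ m (hm.trans hl)]
  have next_iff (ω) (hω : ∀ l ≤ k, Z l ω = z l) :
      Z (k + 1) ω = z' ↔ z' = step (z k) (π z') ∧ π (Z (k + 1) ω) = π z' := by
    rw [← hω k le_rfl]
    constructor
    · rintro rfl
      exact ⟨hZ k ω, rfl⟩
    · rintro ⟨hz', hπz'⟩
      rw [hZ, hπz', ← hz']
  have event_eq : {ω | Z (k + 1) ω = z' ∧ ∀ l ≤ k, Z l ω = z l} =
      {ω | z' = step (z k) (π z') ∧ π (Z (k + 1) ω) = π z' ∧ ∀ l ≤ k, π (Z l ω) = π (z l)} := by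
    ext ω
    rw [Set.mem_ofPred_eq, Set.mem_ofPred_eq, and_congr_left (next_iff ω), past_iff, and_assoc]
  rw [event_eq]
  by_cases hz' : z' = step (z k) (π z')
  · simp only [← hz', if_true, true_and, past_iff]
    exact hπ k (π z') fun l => π (z l)
  · simp only [hz', if_false, false_and, Set.ofPred_false, measure_empty, ENNReal.toReal_zero,
      zero_mul]

end IsMarkovChain

theorem intToFin_zero (T : ℕ) [NeZero T] : intToFin T 0 = 0 :=
  Fin.ext (by simp [intToFin])

theorem intToFin_add_one (T : ℕ) [NeZero T] (a : ℤ) :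
    intToFin T (a + 1) = intToFin T a + 1 := by
  have hT : (T : ℤ) ≠ 0 := mod_cast NeZero.ne T
  apply Fin.ext
  zify
  simp [intToFin, Fin.val_add, Int.toNat_of_nonneg (Int.emod_nonneg _ hT)]

section ObservationTimes

variable {Ω : Type} {NN MM T : ℕ} {r : ℕ → Ω → Fin NN} {s : ℕ → Ω → Fin MM} {f : Fin MM → Bool}
  {τ₀ : ℤ} {σ₀ : Fin NN} {k : ℕ} {ω : Ω}

theorem tauZ_of_obs (h : f (s k ω) = true) : tauZ s f τ₀ k ω = k := by
  rw [tauZ, if_pos ⟨k, le_rfl, h⟩, Nat.findGreatest_eq h]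

theorem sigmaProc_of_obs (h : f (s k ω) = true) : sigmaProc r s f σ₀ k ω = r k ω := by
  rw [sigmaProc, if_pos ⟨k, le_rfl, h⟩, Nat.findGreatest_eq h]

theorem exists_obs_le_succ_iff (h : ¬ f (s (k + 1) ω) = true) :
    (∃ j ≤ k + 1, f (s j ω) = true) ↔ ∃ j ≤ k, f (s j ω) = true := by
  simp only [Nat.le_succ_iff, or_and_right, exists_or, exists_eq_left, h, Bool.false_eq_true,
    or_false]

theorem tauZ_zero_of_not_obs (h : ¬ f (s 0 ω) = true) : tauZ s f τ₀ 0 ω = τ₀ := by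
  simp [tauZ, h]

theorem sigmaProc_zero_of_not_obs (h : ¬ f (s 0 ω) = true) : sigmaProc r s f σ₀ 0 ω = σ₀ := by
  simp [sigmaProc, h]

theorem tauZ_succ_of_not_obs (h : ¬ f (s (k + 1) ω) = true) :
    tauZ s f τ₀ (k + 1) ω = tauZ s f τ₀ k ω := by
  simp only [tauZ, exists_obs_le_succ_iff h, Nat.findGreatest_succ, if_neg h]

theorem sigmaProc_succ_of_not_obs (h : ¬ f (s (k + 1) ω) = true) :
    sigmaProc r s f σ₀ (k + 1) ω = sigmaProc r s f σ₀ k ω := by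
  simp only [sigmaProc, exists_obs_le_succ_iff h, Nat.findGreatest_succ, if_neg h]

variable [NeZero T]

theorem rhoProc_of_obs (h : f (s k ω) = true) : rhoProc (T := T) s f τ₀ k ω = 0 := by
  rw [rhoProc, tauZ_of_obs h, sub_self, intToFin_zero]

theorem rhoProc_succ_of_not_obs (h : ¬ f (s (k + 1) ω) = true) :
    rhoProc (T := T) s f τ₀ (k + 1) ω = rhoProc s f τ₀ k ω + 1 := by
  rw [rhoProc, rhoProc, tauZ_succ_of_not_obs h, ← intToFin_add_one, Nat.cast_succ,
    add_sub_right_comm]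

end ObservationTimes

section ExtendedChain

variable {NN MM T : ℕ} [NeZero T]

/-- The update rule of the extended process: the value of `(r, s, σ, ρ)` at a time when
`(r, s) = a`, where `c` is the value of `(σ, ρ)` one time step earlier. -/
def rbarStep (f : Fin MM → Bool) (c : Fin NN × Fin T) (a : Fin NN × Fin MM) : XT NN MM T :=
  (a.1, a.2, if f a.2 = true then (a.1, 0) else (c.1, c.2 + 1))

theorem eq_rbarStep_iff (f : Fin MM → Bool) (c : Fin NN × Fin T) (χ : XT NN MM T) :
    χ = rbarStep f c (χ.1, χ.2.1) ↔
      if f χ.2.1 = true then χ.1 = χ.2.2.1 ∧ χ.2.2.2 = 0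
      else χ.2.2.1 = c.1 ∧ χ.2.2.2 = c.2 + 1 := by
  obtain ⟨α, β, γ, δ⟩ := χ
  split_ifs with h <;> simp [rbarStep, h, eq_comm]

theorem pbar_eq_ite (P : Matrix (Fin NN) (Fin NN) ℝ) (Q : Matrix (Fin MM) (Fin MM) ℝ)
    (f : Fin MM → Bool) (χ χ' : XT NN MM T) :
    pbar P Q f χ χ' =
      if χ' = rbarStep f χ.2.2 (χ'.1, χ'.2.1) then P χ.1 χ'.1 * Q χ.2.1 χ'.2.1 else 0 := by
  simp only [pbar, eq_rbarStep_iff]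
  split_ifs <;> simp

variable {Ω : Type} (r : ℕ → Ω → Fin NN) (s : ℕ → Ω → Fin MM) (f : Fin MM → Bool) (τ₀ : ℤ)
  (σ₀ : Fin NN)

-- `(σ₀, ⌊-1 - τ₀⌋_T)` plays the role of the value of `(σ, ρ)` at time `-1`.
theorem rbarProc_zero (ω : Ω) :
    rbarProc r s f τ₀ σ₀ 0 ω = rbarStep f (σ₀, intToFin T (-1 - τ₀)) (r 0 ω, s 0 ω) := by
  by_cases h : f (s 0 ω) = true
  · simp only [rbarProc, rbarStep, if_pos h, sigmaProc_of_obs h, rhoProc_of_obs h]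
  · simp only [rbarProc, rbarStep, if_neg h, sigmaProc_zero_of_not_obs h, rhoProc,
      tauZ_zero_of_not_obs h, ← intToFin_add_one]
    congr 4
    push_cast
    ring

theorem rbarProc_succ (k : ℕ) (ω : Ω) :
    rbarProc (T := T) r s f τ₀ σ₀ (k + 1) ω =
      rbarStep f (rbarProc r s f τ₀ σ₀ k ω).2.2 (r (k + 1) ω, s (k + 1) ω) := by
  by_cases h : f (s (k + 1) ω) = true
  · simp only [rbarProc, rbarStep, if_pos h, sigmaProc_of_obs h, rhoProc_of_obs h]
  · simp only [rbarProc, rbarStep, if_neg h, sigmaProc_succ_of_not_obs h,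
      rhoProc_succ_of_not_obs h]

theorem rbar_is_markov_chain_general [MeasurableSpace Ω] {μ : Measure Ω}
    {P : Matrix (Fin NN) (Fin NN) ℝ} {Q : Matrix (Fin MM) (Fin MM) ℝ}
    (hr : IsMarkovChain μ r fun i j => P i j) (hs : IsMarkovChain μ s fun i j => Q i j)
    (hind : IndepFun (fun ω l => r l ω) (fun ω l => s l ω) μ) :
    IsMarkovChain μ (rbarProc (T := T) r s f τ₀ σ₀) (pbar P Q f) := by
  rw [funext₂ (pbar_eq_ite P Q f)]
  exact (hr.prodMk hs hind).of_recursion (fun χ => (χ.1, χ.2.1))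
    (rbarStep f (σ₀, intToFin T (-1 - τ₀))) (fun χ => rbarStep f χ.2.2)
    (rbarProc_zero r s f τ₀ σ₀) (rbarProc_succ r s f τ₀ σ₀)

end ExtendedChain

/-- `r̄(k) = (r(k), s(k), σ(k), ρ(k))` is a time-homogeneous Markov
chain with state space `𝔛` and transition probabilities `p̄`. -/
theorem rbar_is_markov_chain
    {Ω : Type} [MeasurableSpace Ω] (μ : Measure Ω) [IsProbabilityMeasure μ]
    {NN MM T : ℕ} [NeZero NN] [NeZero MM] [NeZero T]
    (P : Matrix (Fin NN) (Fin NN) ℝ) (Q : Matrix (Fin MM) (Fin MM) ℝ)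
    (hP0 : ∀ i j, 0 ≤ P i j) (hP1 : ∀ i, ∑ j, P i j = 1)
    (hQ0 : ∀ i j, 0 ≤ Q i j) (hQ1 : ∀ i, ∑ j, Q i j = 1)
    (r : ℕ → Ω → Fin NN) (s : ℕ → Ω → Fin MM)
    (hmr : ∀ k, Measurable (r k)) (hms : ∀ k, Measurable (s k))
    (hr : IsMarkovChain μ r fun i j => P i j) (hs : IsMarkovChain μ s fun i j => Q i j)
    (hind : IndepFun (fun ω l => r l ω) (fun ω l => s l ω) μ)
    (f : Fin MM → Bool) (τ₀ : ℤ) (hτ₀ : τ₀ ≤ 0) (σ₀ : Fin NN)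
    (k : ℕ) (χ' : XT NN MM T) (hχ' : inX f χ')
    (χ : ℕ → XT NN MM T) (hχ : ∀ j ≤ k, inX f (χ j)) :
    (μ {ω | rbarProc r s f τ₀ σ₀ (k + 1) ω = χ'
        ∧ ∀ j ≤ k, rbarProc r s f τ₀ σ₀ j ω = χ j}).toReal
      = pbar P Q f (χ k) χ'
        * (μ {ω | ∀ j ≤ k, rbarProc r s f τ₀ σ₀ j ω = χ j}).toReal := by
  exact rbar_is_markov_chain_general r s f τ₀ σ₀ hr hs hind k χ' χ

end
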